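/- arXiv:2509.03916 — 7 statements merged into one kernel-verified Lean document; each statement's English description precedes it below -/
import Mathlib

section
/- Let μ be a finite Borel measure on [0, ∞), let ℓ > 0 with μ({ℓ}) = 0, and let g : [0, ∞) → ℝ be locally Lipschitz and differentiable at ℓ. Then the function H(x) := ∫ g(min(x, r)) dμ(r) is differentiable at ℓ, and H'(ℓ) = g'(ℓ) · μ((ℓ, ∞)). -/
/-!
Differentiation under the integral sign by dominated convergence. For `r ≥ 0` and `x` in
the compact neighbourhood `[0, ℓ + 1]` of `ℓ`, the value `min x r` stays in `[0, ℓ + 1]`, where `g` is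
bounded and Lipschitz with a single constant `K`; since `x ↦ min x r` is `1`-Lipschitz, `K` is an
integrable Lipschitz bound uniform in `r`. For `r ≠ ℓ`, hence almost everywhere, `x ↦ g (min x r)`
coincides near `ℓ` with `g` (if `r > ℓ`) or with a constant (if `r < ℓ`), so its derivative at `ℓ`
is `g'` times the indicator of `(ℓ, ∞)`, whose integral is `g' * μ (ℓ, ∞)`.
-/

open Set MeasureTheory

/-- for a finite Borel measure `μ` concentrated on `[0, ∞)`, `ℓ > 0` with
`μ({ℓ}) = 0`, and `g` locally Lipschitz and differentiable at `ℓ` with derivative `g'`,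
the function `H(x) = ∫ g(min(x, r)) dμ(r)` is differentiable at `ℓ` with
`H'(ℓ) = g'(ℓ) · μ((ℓ, ∞))`. -/
theorem stmt9 (μ : Measure ℝ) [IsFiniteMeasure μ] (hsupp : μ (Iio 0) = 0)
    (ℓ : ℝ) (hℓ : 0 < ℓ) (hatom : μ {ℓ} = 0)
    (g : ℝ → ℝ) (hlip : LocallyLipschitz g) (g' : ℝ) (hg : HasDerivAt g g' ℓ) :
    HasDerivAt (fun x => ∫ r, g (min x r) ∂μ) (g' * (μ (Ioi ℓ)).toReal) ℓ := by
  have hcont : Continuous g := hlip.continuous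
  have hnonneg : ∀ᵐ r ∂μ, 0 ≤ r := by
    filter_upwards [measure_eq_zero_iff_ae_notMem.1 hsupp] with r hr
    simpa using hr
  have hne : ∀ᵐ r ∂μ, r ≠ ℓ := by
    filter_upwards [measure_eq_zero_iff_ae_notMem.1 hatom] with r hr
    simpa using hr
  obtain ⟨K, hK⟩ := (hlip.locallyLipschitzOn (s := Icc 0 (ℓ + 1))).exists_lipschitzOnWith_of_compact
    isCompact_Icc
  obtain ⟨C, hC⟩ := isCompact_Icc.exists_bound_of_continuousOn
    (hcont.continuousOn (s := Icc 0 (ℓ + 1)))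
  have hmeas : ∀ x, AEStronglyMeasurable (fun r => g (min x r)) μ := fun x =>
    (hcont.comp (continuous_const.min continuous_id)).aestronglyMeasurable
  have hmem : ∀ r, 0 ≤ r → MapsTo (fun x => min x r) (Icc 0 (ℓ + 1)) (Icc 0 (ℓ + 1)) :=
    fun r hr x hx => ⟨le_min hx.1 hr, (min_le_left _ _).trans hx.2⟩
  have key := hasDerivAt_integral_of_dominated_loc_of_lip (μ := μ) (𝕜 := ℝ)
    (F := fun x r => g (min x r)) (x₀ := ℓ) (s := Icc 0 (ℓ + 1))
    (bound := fun _ => (K : ℝ)) (F' := (Ioi ℓ).indicator fun _ => g')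
    (Icc_mem_nhds hℓ (by linarith)) (Filter.Eventually.of_forall hmeas) ?_
    (aestronglyMeasurable_const.indicator measurableSet_Ioi) ?_ (integrable_const _) ?_
  · have h := key.2
    rw [integral_indicator_const _ measurableSet_Ioi, smul_eq_mul, mul_comm] at h
    exact h
  · refine Integrable.of_bound (hmeas ℓ) C ?_
    filter_upwards [hnonneg] with r hr
    exact hC _ (hmem r hr ⟨hℓ.le, by linarith⟩)
  · filter_upwards [hnonneg] with r hr
    have h1 : LipschitzWith 1 (fun x : ℝ => min x r) := LipschitzWith.id.min_const r
    have h2 := hK.comp (h1.lipschitzOnWith (s := Icc 0 (ℓ + 1))) (hmem r hr)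
    simpa [Function.comp_def] using h2
  · filter_upwards [hne] with r hr
    rcases lt_or_gt_of_ne hr with h | h
    · rw [indicator_of_notMem (by simpa using h.le)]
      refine (hasDerivAt_const ℓ (g r)).congr_of_eventuallyEq ?_
      filter_upwards [lt_mem_nhds h] with x hx
      rw [min_eq_right hx.le]
    · rw [indicator_of_mem (by simpa using h)]
      refine hg.congr_of_eventuallyEq ?_
      filter_upwards [gt_mem_nhds h] with x hx
      rw [min_eq_left hx.le]
end

section
/- Let μ be a finite Borel measure on [0, ∞), let q ∈ ℝ, and let ℓ > 0 with μ({ℓ}) = 0. Then the function G(x) := ∫ min(x, r)(2q − min(x, r)) dμ(r) is differentiable at ℓ with G'(ℓ) = 2(q − ℓ) · μ((ℓ, ∞)). -/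
/-!
Differentiation under the integral sign. For `r ≠ ℓ` the integrand `x ↦ min x r * (2q - min x r)`
is near `ℓ` either `x (2q - x)` (if `ℓ < r`) or constant (if `r < ℓ`), so its derivative at `ℓ` is
`2 (q - ℓ)` times the indicator of `(ℓ, ∞)`; the exceptional point `r = ℓ` is null because `μ` has
no atom there. For `r ≥ 0` and `x ∈ (0, 2ℓ)` the minimum stays in `[0, 2ℓ]`, on which
`m ↦ m (2q - m)` is Lipschitz with constant `2|q| + 4ℓ`. This constant is integrable since `μ` is
finite, so dominated convergence applies.
-/

open Set MeasureTheory

theorem payoff_lipschitz {q ℓ r x y : ℝ} (hr : 0 ≤ r) (hx : x ∈ Ioo 0 (2 * ℓ))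
    (hy : y ∈ Ioo 0 (2 * ℓ)) :
    |min x r * (2 * q - min x r) - min y r * (2 * q - min y r)|
      ≤ (2 * |q| + 4 * ℓ) * |x - y| := by
  have h1 : |min x r - min y r| ≤ |x - y| := by
    simpa using abs_min_sub_min_le_max x r y r
  have hx0 : 0 ≤ min x r := le_min hx.1.le hr
  have hy0 : 0 ≤ min y r := le_min hy.1.le hr
  have hx1 : min x r ≤ 2 * ℓ := (min_le_left _ _).trans hx.2.le
  have hy1 : min y r ≤ 2 * ℓ := (min_le_left _ _).trans hy.2.le
  have h2 : |2 * q - min x r - min y r| ≤ 2 * |q| + 4 * ℓ := by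
    rw [abs_le]
    constructor <;> linarith [le_abs_self q, neg_abs_le q]
  calc _ = |2 * q - min x r - min y r| * |min x r - min y r| := by
        rw [← abs_mul]; congr 1; ring
    _ ≤ _ := mul_le_mul h2 h1 (abs_nonneg _) ((abs_nonneg _).trans h2)

theorem payoff_hasDerivAt {q ℓ r : ℝ} (hr : r ≠ ℓ) :
    HasDerivAt (fun x => min x r * (2 * q - min x r))
      ((Ioi ℓ).indicator (fun _ => 2 * (q - ℓ)) r) ℓ := by
  rcases lt_or_gt_of_ne hr with h | h
  · rw [indicator_of_notMem (by simpa using h.le)]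
    refine (hasDerivAt_const ℓ (r * (2 * q - r))).congr_of_eventuallyEq ?_
    filter_upwards [lt_mem_nhds h] with x hx
    rw [min_eq_right hx.le]
  · rw [indicator_of_mem (by simpa using h)]
    have h0 : HasDerivAt (fun x : ℝ => x * (2 * q - x)) (2 * (q - ℓ)) ℓ := by
      have h1 := (hasDerivAt_id' ℓ).fun_mul ((hasDerivAt_id' ℓ).const_sub (2 * q))
      exact h1.congr_deriv (by ring)
    refine h0.congr_of_eventuallyEq ?_
    filter_upwards [gt_mem_nhds h] with x hx
    rw [min_eq_left hx.le]

/-- for a finite Borel measure `μ` concentrated on `[0, ∞)`, `q ∈ ℝ`, and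
`ℓ > 0` with `μ({ℓ}) = 0`, the function `G(x) = ∫ min(x, r)(2q − min(x, r)) dμ(r)` is
differentiable at `ℓ` with `G'(ℓ) = 2(q − ℓ) μ((ℓ, ∞))`. -/
theorem stmt10 (μ : Measure ℝ) [IsFiniteMeasure μ] (hsupp : μ (Iio 0) = 0)
    (q : ℝ) (ℓ : ℝ) (hℓ : 0 < ℓ) (hatom : μ {ℓ} = 0) :
    HasDerivAt (fun x => ∫ r, min x r * (2 * q - min x r) ∂μ)
      (2 * (q - ℓ) * (μ (Ioi ℓ)).toReal) ℓ := by
  have hpos : ∀ᵐ r ∂μ, 0 ≤ r := by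
    rw [ae_iff]
    simpa only [not_le] using! hsupp
  have hne : ∀ᵐ r ∂μ, r ≠ ℓ := by
    rw [ae_iff]
    simpa only [not_not] using! hatom
  have hmeas : ∀ x : ℝ, AEStronglyMeasurable (fun r => min x r * (2 * q - min x r)) μ := fun x =>
    Continuous.aestronglyMeasurable (by fun_prop)
  have hint : Integrable (fun r => min ℓ r * (2 * q - min ℓ r)) μ := by
    refine Integrable.of_bound (hmeas ℓ) (ℓ * (2 * |q| + ℓ)) ?_
    filter_upwards [hpos] with r hr
    have h0 : 0 ≤ min ℓ r := le_min hℓ.le hr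
    have h1 : min ℓ r ≤ ℓ := min_le_left _ _
    rw [Real.norm_eq_abs, abs_mul, abs_of_nonneg h0]
    refine mul_le_mul h1 ?_ (abs_nonneg _) hℓ.le
    rw [abs_le]
    constructor <;> linarith [le_abs_self q, neg_abs_le q]
  have key := (hasDerivAt_integral_of_dominated_loc_of_lip (𝕜 := ℝ) (μ := μ)
    (F := fun x r => min x r * (2 * q - min x r))
    (F' := (Ioi ℓ).indicator (fun _ => 2 * (q - ℓ)))
    (bound := fun _ => 2 * |q| + 4 * ℓ)
    (Ioo_mem_nhds hℓ (by linarith : ℓ < 2 * ℓ))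
    (Filter.Eventually.of_forall hmeas) hint
    (measurable_const.indicator measurableSet_Ioi).aestronglyMeasurable
    (by
      filter_upwards [hpos] with r hr
      refine LipschitzOnWith.of_dist_le_mul fun x hx y hy => ?_
      have hb : 0 ≤ 2 * |q| + 4 * ℓ := by positivity
      rw [Real.coe_nnabs, abs_of_nonneg hb]
      exact payoff_lipschitz hr hx hy)
    (integrable_const _)
    (hne.mono fun r hr => payoff_hasDerivAt hr)).2
  refine key.congr_deriv ?_
  rw [integral_indicator_const _ measurableSet_Ioi, smul_eq_mul, mul_comm, measureReal_def]
end

section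
/- Let μ be a finite Borel measure on [0, ∞), let ρ > 0, α > 0, q ∈ ℝ, and let ℓ > 0 with μ({ℓ}) = 0. Then the function H(x) := ∫ exp(−ρα · min(x, r)(2q − min(x, r))) dμ(r) is differentiable at ℓ with H'(ℓ) = −2ρα (q − ℓ) · exp(−ρα ℓ(2q − ℓ)) · μ((ℓ, ∞)). -/
open Set MeasureTheory

/-!
Write `g m = exp (-ρ α m (2 q - m))`, so that the integrand is `g (min x r)`. For `r ≠ ℓ`, hence
for `μ`-almost every `r`, the map `x ↦ min x r` coincides near `ℓ` with the identity (`ℓ < r`) or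
with a constant (`r < ℓ`), so the integrand has derivative `g' ℓ` or `0` there. For `r ≥ 0` and
`x ∈ [0, ℓ + 1]` the value `min x r` stays in the compact interval `[0, ℓ + 1]`, where the smooth
function `g` is Lipschitz; since `min` is `1`-Lipschitz in `x`, the integrands share one Lipschitz
constant, integrable because `μ` is finite. Differentiation under the integral sign
(`hasDerivAt_integral_of_dominated_loc_of_lip`) then gives `∫_{(ℓ, ∞)} g' ℓ ∂μ`.
-/

/-- for a finite Borel measure `μ` concentrated on `[0, ∞)`, `ρ > 0`, `α > 0`,
`q ∈ ℝ`, and `ℓ > 0` with `μ({ℓ}) = 0`, the function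
`H(x) = ∫ exp(−ρα min(x, r)(2q − min(x, r))) dμ(r)` is differentiable at `ℓ` with
`H'(ℓ) = −2ρα(q − ℓ) exp(−ραℓ(2q − ℓ)) μ((ℓ, ∞))`. -/
theorem stmt11 (μ : Measure ℝ) [IsFiniteMeasure μ] (hsupp : μ (Iio 0) = 0)
    (ρ α q : ℝ) (hρ : 0 < ρ) (hα : 0 < α)
    (ℓ : ℝ) (hℓ : 0 < ℓ) (hatom : μ {ℓ} = 0) :
    HasDerivAt (fun x => ∫ r, Real.exp (-ρ * α * (min x r * (2 * q - min x r))) ∂μ)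
      (-2 * ρ * α * (q - ℓ) * Real.exp (-ρ * α * (ℓ * (2 * q - ℓ)))
        * (μ (Ioi ℓ)).toReal) ℓ := by
  set g : ℝ → ℝ := fun m => Real.exp (-ρ * α * (m * (2 * q - m)))
  have hgc : ContDiff ℝ 1 g := by fun_prop
  have hg' : HasDerivAt g (-2 * ρ * α * (q - ℓ) * g ℓ) ℓ := by
    have h := (((hasDerivAt_id ℓ).mul ((hasDerivAt_id ℓ).const_sub (2 * q))).const_mul
      (-ρ * α)).exp
    refine h.congr_deriv ?_
    change Real.exp (-ρ * α * (ℓ * (2 * q - ℓ))) * (-ρ * α * (1 * (2 * q - ℓ) + ℓ * -1)) =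
      -2 * ρ * α * (q - ℓ) * Real.exp (-ρ * α * (ℓ * (2 * q - ℓ)))
    ring
  obtain ⟨K, hK⟩ : ∃ K, LipschitzOnWith K g (Icc 0 (ℓ + 1)) :=
    hgc.contDiffOn.exists_lipschitzOnWith one_ne_zero (convex_Icc _ _) isCompact_Icc
  have hpos : ∀ᵐ r ∂μ, 0 ≤ r := by
    rw [ae_iff]
    simp only [not_le]
    exact hsupp
  have hne : ∀ᵐ r ∂μ, r ≠ ℓ := by
    rw [ae_iff]
    simpa using hatom
  have hmeas : ∀ x : ℝ, AEStronglyMeasurable (fun r => g (min x r)) μ := fun x =>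
    (hgc.continuous.comp (continuous_const.min continuous_id)).aestronglyMeasurable
  obtain ⟨C, hC⟩ := (isCompact_Icc (a := (0 : ℝ)) (b := ℓ + 1)).exists_bound_of_continuousOn
    hgc.continuous.continuousOn
  have hmem : ∀ x ∈ Icc 0 (ℓ + 1), ∀ r : ℝ, 0 ≤ r → min x r ∈ Icc 0 (ℓ + 1) :=
    fun x hx r hr => ⟨le_min hx.1 hr, (min_le_left _ _).trans hx.2⟩
  have hint : Integrable (fun r => g (min ℓ r)) μ := by
    refine Integrable.of_bound (hmeas ℓ) C ?_
    filter_upwards [hpos] with r hr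
    exact hC _ (hmem ℓ ⟨hℓ.le, by linarith⟩ r hr)
  have key := (hasDerivAt_integral_of_dominated_loc_of_lip (μ := μ)
    (F := fun x r => g (min x r)) (bound := fun _ => (K : ℝ))
    (F' := (Ioi ℓ).indicator fun _ => -2 * ρ * α * (q - ℓ) * g ℓ)
    (Icc_mem_nhds hℓ (lt_add_one ℓ)) (Filter.Eventually.of_forall hmeas) hint
    (aestronglyMeasurable_const.indicator measurableSet_Ioi) ?_ (integrable_const _) ?_).2
  · rw [integral_indicator_const _ measurableSet_Ioi, smul_eq_mul, mul_comm] at key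
    exact key
  · filter_upwards [hpos] with r hr
    have hmin : LipschitzOnWith 1 (fun x : ℝ => min x r) (Icc 0 (ℓ + 1)) :=
      (LipschitzWith.id.min_const r).lipschitzOnWith
    simpa [Function.comp_def] using hK.comp hmin fun x hx => hmem x hx r hr
  · filter_upwards [hne] with r hr
    rcases lt_or_gt_of_ne hr with h | h
    · rw [indicator_of_notMem (by simpa using h.le)]
      refine (hasDerivAt_const ℓ (g r)).congr_of_eventuallyEq ?_
      filter_upwards [lt_mem_nhds h] with x hx
      rw [min_eq_right hx.le]
    · rw [indicator_of_mem (by simpa using h)]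
      refine hg'.congr_of_eventuallyEq ?_
      filter_upwards [gt_mem_nhds h] with x hx
      rw [min_eq_left hx.le]
end

section
/- Let M ≥ 2, q > 0, θ¹, …, θᴹ > 0, and let μ₁, …, μ_M be finite Borel measures on [0, ∞). Define Gᵢ(x) := ∫ min(x, r)(2q − min(x, r)) dμᵢ(r). Suppose ℓ̂ = (ℓ̂¹, …, ℓ̂ᴹ) with ℓ̂ⁱ > 0 and μᵢ({ℓ̂ⁱ}) = 0 for every i, and suppose ℓ̂ is a local maximum of the function ℓ ↦ Σᵢ θⁱ Gᵢ(ℓⁱ) restricted to the affine set {ℓ ∈ ℝᴹ : Σᵢ ℓⁱ = Σᵢ ℓ̂ⁱ}. Then for all i, j ∈ {1, …, M}: θⁱ (q − ℓ̂ⁱ) μᵢ((ℓ̂ⁱ, ∞)) = θʲ (q − ℓ̂ʲ) μⱼ((ℓ̂ʲ, ∞)). -/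
open Set MeasureTheory

/-!
The marginal value of pool `i` is a derivative: for `x > 0` which is not an atom of `μ`, the
function `x ↦ ∫ min x r * (2q - min x r) dμ(r)` has derivative `2 (q - x) μ((x, ∞))`, by
differentiation under the integral sign (`hasDerivAt_poolGain`). Indeed the integrand is constant
in `x` for `r < x` and equals `x (2q - x)` for `r > x`, and it is Lipschitz in `x` on a bounded
neighbourhood, uniformly in `r ≥ 0`.

Moving volume from pool `j` to pool `i`, along `t ↦ ℓ + t (eᵢ - eⱼ)`, preserves the total volume,
so the objective restricted to this line has a local maximum at `t = 0`. Fermat's theorem then says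
that the difference of the two marginal values vanishes.
-/

/-- For `r` bounded below by `0`, the gain is Lipschitz in the posted volume on `(0, 2x)`, because
`y (2q - y) - z (2q - z) = (y - z) (2q - y - z)` and `min · r` is `1`-Lipschitz. -/
lemma lipschitzOnWith_gain {q x r : ℝ} (hq : 0 < q) (hr : 0 ≤ r) :
    LipschitzOnWith (Real.nnabs (2 * q + 4 * x))
      (fun y => min y r * (2 * q - min y r)) (Ioo 0 (2 * x)) := by
  refine LipschitzOnWith.of_dist_le_mul fun y hy z hz => ?_
  have hx : 0 < x := by linarith [hy.1, hy.2]
  rw [Real.dist_eq, Real.dist_eq, Real.coe_nnabs,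
    abs_of_pos (by positivity : 0 < 2 * q + 4 * x)]
  have hmin : |min y r - min z r| ≤ |y - z| := by
    simpa using abs_min_sub_min_le_max y r z r
  have hfac : |2 * q - min y r - min z r| ≤ 2 * q + 4 * x := by
    have h1 : 0 ≤ min y r := le_min hy.1.le hr
    have h2 : 0 ≤ min z r := le_min hz.1.le hr
    have h3 := min_le_left y r
    have h4 := min_le_left z r
    rw [abs_le]
    constructor <;> linarith [hy.2, hz.2]
  calc |min y r * (2 * q - min y r) - min z r * (2 * q - min z r)|
      = |2 * q - min y r - min z r| * |min y r - min z r| := by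
        rw [← abs_mul]; congr 1; ring
    _ ≤ (2 * q + 4 * x) * |y - z| := by gcongr

lemma hasDerivAt_gain {q x r : ℝ} (hr : r ≠ x) :
    HasDerivAt (fun y => min y r * (2 * q - min y r))
      ((Ioi x).indicator (fun _ => 2 * (q - x)) r) x := by
  rcases lt_or_gt_of_ne hr with h | h
  · rw [indicator_of_notMem (by simpa using h.le)]
    refine (hasDerivAt_const x (r * (2 * q - r))).congr_of_eventuallyEq ?_
    filter_upwards [Ioi_mem_nhds h] with y hy
    rw [min_eq_right (le_of_lt hy)]
  · rw [indicator_of_mem (by simpa using h)]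
    have h1 : HasDerivAt (fun y : ℝ => y * (2 * q - y)) (2 * (q - x)) x := by
      have h2 := (hasDerivAt_id' x).fun_mul ((hasDerivAt_id' x).const_sub (2 * q))
      exact h2.congr_deriv (by ring)
    refine h1.congr_of_eventuallyEq ?_
    filter_upwards [Iio_mem_nhds h] with y hy
    rw [min_eq_left (le_of_lt hy)]

/-- The expected gain of a single pool is differentiable in the posted volume at every positive
point which carries no mass. -/
lemma hasDerivAt_poolGain {q x : ℝ} (hq : 0 < q) (hx : 0 < x) (μ : Measure ℝ)
    [IsFiniteMeasure μ] (hsupp : μ (Iio 0) = 0) (hatom : μ {x} = 0) :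
    HasDerivAt (fun y => ∫ r, min y r * (2 * q - min y r) ∂μ)
      (2 * (q - x) * (μ (Ioi x)).toReal) x := by
  have hnonneg : ∀ᵐ r ∂μ, 0 ≤ r := by
    rw [ae_iff]; simpa [Iio, not_le] using hsupp
  have hne : ∀ᵐ r ∂μ, r ≠ x := by
    rw [ae_iff]; simpa using hatom
  have hmeas : ∀ y : ℝ, AEStronglyMeasurable (fun r => min y r * (2 * q - min y r)) μ :=
    fun y => (by fun_prop : Continuous fun r => min y r * (2 * q - min y r)).aestronglyMeasurable
  have hint : Integrable (fun r => min x r * (2 * q - min x r)) μ := by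
    refine Integrable.of_bound (hmeas x) (x * (2 * q + x)) ?_
    filter_upwards [hnonneg] with r hr
    have h1 : 0 ≤ min x r := le_min hx.le hr
    have h2 := min_le_left x r
    rw [Real.norm_eq_abs, abs_mul, abs_of_nonneg h1]
    have h3 : |2 * q - min x r| ≤ 2 * q + x := by
      rw [abs_le]; constructor <;> linarith
    gcongr
  have key := (hasDerivAt_integral_of_dominated_loc_of_lip (μ := μ)
    (F := fun y r => min y r * (2 * q - min y r))
    (F' := (Ioi x).indicator fun _ => 2 * (q - x))
    (bound := fun _ => 2 * q + 4 * x)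
    (Ioo_mem_nhds hx (by linarith : x < 2 * x))
    (Filter.Eventually.of_forall hmeas) hint
    (aestronglyMeasurable_const.indicator measurableSet_Ioi)
    (hnonneg.mono fun r hr => lipschitzOnWith_gain hq hr)
    (integrable_const _)
    (hne.mono fun r hr => hasDerivAt_gain hr)).2
  rw [integral_indicator_const _ measurableSet_Ioi, smul_eq_mul, mul_comm (μ.real _)] at key
  exact key

/-- first-order condition for the multi-dark-pool allocation with linear
utility: at an interior local maximum `ℓ̂` (with nonatomic values) of
`ℓ ↦ Σᵢ θⁱ Gᵢ(ℓⁱ)` on the affine set `{Σᵢ ℓⁱ = Σᵢ ℓ̂ⁱ}`, the marginal values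
`θⁱ (q − ℓ̂ⁱ) μᵢ((ℓ̂ⁱ, ∞))` are equal across pools. -/
theorem stmt15 (M : ℕ) (hM : 2 ≤ M) (q : ℝ) (hq : 0 < q)
    (θ : Fin M → ℝ) (hθ : ∀ i, 0 < θ i)
    (μ : Fin M → Measure ℝ) [∀ i, IsFiniteMeasure (μ i)]
    (hsupp : ∀ i, μ i (Iio 0) = 0)
    (ℓ : Fin M → ℝ) (hℓ : ∀ i, 0 < ℓ i) (hatom : ∀ i, μ i {ℓ i} = 0)
    (hmax : IsLocalMaxOn
      (fun l : Fin M → ℝ =>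
        ∑ i, θ i * ∫ r, min (l i) r * (2 * q - min (l i) r) ∂(μ i))
      {l : Fin M → ℝ | ∑ i, l i = ∑ i, ℓ i} ℓ) :
    ∀ i j, θ i * (q - ℓ i) * (μ i (Ioi (ℓ i))).toReal
         = θ j * (q - ℓ j) * (μ j (Ioi (ℓ j))).toReal := by
  intro i j
  rcases eq_or_ne i j with rfl | hij
  · rfl
  -- the direction `eᵢ - eⱼ`, tangent to the constraint set
  let d : Fin M → ℝ := Pi.single i 1 - Pi.single j 1
  have hd : ∑ k, d k = 0 := by simp [d]
  have hloc : IsLocalMax (fun t : ℝ => ∑ k, θ k * ∫ r, min (ℓ k + t * d k) r *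
      (2 * q - min (ℓ k + t * d k) r) ∂(μ k)) 0 := by
    have hpath : Filter.Tendsto (fun (t : ℝ) k => ℓ k + t * d k) (nhds 0)
        (nhdsWithin ℓ {l : Fin M → ℝ | ∑ k, l k = ∑ k, ℓ k}) := by
      refine tendsto_nhdsWithin_iff.2 ⟨?_, Filter.Eventually.of_forall fun t => ?_⟩
      · have hc : Continuous fun (t : ℝ) k => ℓ k + t * d k := by fun_prop
        simpa using hc.tendsto 0
      · simp [Finset.sum_add_distrib, ← Finset.mul_sum, hd]
    have h := hpath.eventually hmax
    simpa [IsLocalMax, IsMaxFilter] using h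
  have hderiv : HasDerivAt (fun t : ℝ => ∑ k, θ k * ∫ r, min (ℓ k + t * d k) r *
      (2 * q - min (ℓ k + t * d k) r) ∂(μ k))
      (∑ k, θ k * (2 * (q - ℓ k) * (μ k (Ioi (ℓ k))).toReal * d k)) 0 := by
    refine HasDerivAt.fun_sum fun k _ => HasDerivAt.const_mul _ ?_
    have hline : HasDerivAt (fun t : ℝ => ℓ k + t * d k) (d k) 0 := by
      simpa using ((hasDerivAt_id (0 : ℝ)).mul_const (d k)).const_add (ℓ k)
    exact HasDerivAt.comp_of_eq (0 : ℝ)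
      (hasDerivAt_poolGain hq (hℓ k) (μ k) (hsupp k) (hatom k)) hline (by simp)
  have hzero := hloc.hasDerivAt_eq_zero hderiv
  simp only [d, Pi.sub_apply, mul_sub, Finset.sum_sub_distrib, Pi.single_apply, mul_ite, mul_one,
    mul_zero, Finset.sum_ite_eq', Finset.mem_univ, if_true] at hzero
  linarith
end

section
/- Let M ≥ 2, q > 0, ρ > 0, α > 0, θ¹, …, θᴹ > 0, and let μ₁, …, μ_M be finite Borel measures on [0, ∞). Define Hᵢ(x) := ∫ exp(−ρα · min(x, r)(2q − min(x, r))) dμᵢ(r). Suppose ℓ̂ = (ℓ̂¹, …, ℓ̂ᴹ) with ℓ̂ⁱ > 0 and μᵢ({ℓ̂ⁱ}) = 0 for every i, and suppose ℓ̂ is a local minimum of the function ℓ ↦ Σᵢ θⁱ Hᵢ(ℓⁱ) restricted to the affine set {ℓ ∈ ℝᴹ : Σᵢ ℓⁱ = Σᵢ ℓ̂ⁱ}. Then for all i, j ∈ {1, …, M}: θⁱ (q − ℓ̂ⁱ) exp(−ρα ℓ̂ⁱ(2q − ℓ̂ⁱ)) μᵢ((ℓ̂ⁱ, ∞)) = θʲ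 (q − ℓ̂ʲ) exp(−ρα ℓ̂ʲ(2q − ℓ̂ʲ)) μⱼ((ℓ̂ʲ, ∞)). -/
open Set MeasureTheory

/-!
Each summand `x ↦ ∫ g (min x r) dν(r)`, with `g` of class `C¹`, is differentiable at every `x > 0`
which is not an atom of `ν`, with derivative `g' x * ν (x, ∞)`
(`hasDerivAt_integral_comp_min`): the integrand is Lipschitz in `x`, uniformly in `r ≥ 0`, and its
derivative is `g' x` for `r > x` and `0` for `r < x`. Moving the mass `t` from pool `j` to pool `i`
keeps the total volume, so the objective along this line has a local minimum at `t = 0`, and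
Fermat's theorem says that the two marginal costs agree; dividing by the common factor `-2ρα` gives
the claim.
-/

/-- Differentiation under the integral sign for a payoff truncated at a random level `r ≥ 0`. -/
theorem hasDerivAt_integral_comp_min {g : ℝ → ℝ} {g' x : ℝ} (hg : ContDiff ℝ 1 g)
    (hgx : HasDerivAt g g' x) (ν : Measure ℝ) [IsFiniteMeasure ν] (hν : ν (Iio 0) = 0)
    (hx : 0 < x) (hatom : ν {x} = 0) :
    HasDerivAt (fun y => ∫ r, g (min y r) ∂ν) (g' * (ν (Ioi x)).toReal) x := by
  have hpos : ∀ᵐ r ∂ν, 0 ≤ r := by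
    rw [ae_iff]
    simp only [not_le]
    exact hν
  have hne : ∀ᵐ r ∂ν, r ≠ x := by
    rw [ae_iff]
    simp only [not_not]
    exact hatom
  obtain ⟨K, hK⟩ := (hg.locallyLipschitz.locallyLipschitzOn
    (s := Icc 0 (x + 1))).exists_lipschitzOnWith_of_compact isCompact_Icc
  obtain ⟨C, hC⟩ := (isCompact_Icc (a := (0 : ℝ)) (b := x)).exists_bound_of_continuousOn
    hg.continuous.continuousOn
  have hmeas : ∀ y, AEStronglyMeasurable (fun r => g (min y r)) ν := fun y =>
    (hg.continuous.comp (continuous_const.min continuous_id)).aestronglyMeasurable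
  have key := (hasDerivAt_integral_of_dominated_loc_of_lip (𝕜 := ℝ) (μ := ν)
    (F := fun y r => g (min y r)) (x₀ := x) (s := Icc 0 (x + 1)) (bound := fun _ => (K : ℝ))
    (F' := (Ioi x).indicator fun _ => g')
    (Icc_mem_nhds hx (lt_add_one x)) (Filter.Eventually.of_forall hmeas)
    ?_ ?_ ?_ (integrable_const _) ?_).2
  · rwa [integral_indicator_const _ measurableSet_Ioi, smul_eq_mul, mul_comm] at key
  · refine Integrable.of_bound (hmeas x) C ?_
    filter_upwards [hpos] with r hr
    exact hC _ ⟨le_min hx.le hr, min_le_left _ _⟩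
  · exact (measurable_const.indicator measurableSet_Ioi).aestronglyMeasurable
  · filter_upwards [hpos] with r hr
    refine LipschitzOnWith.of_dist_le_mul fun y hy z hz => ?_
    have h1 := hK.dist_le_mul (min y r) ⟨le_min hy.1 hr, (min_le_left _ _).trans hy.2⟩
      (min z r) ⟨le_min hz.1 hr, (min_le_left _ _).trans hz.2⟩
    have h2 : dist (min y r) (min z r) ≤ dist y z := by
      simpa [Real.dist_eq] using abs_min_sub_min_le_max y r z r
    rw [Real.nnabs_of_nonneg K.coe_nonneg, Real.toNNReal_coe]
    exact h1.trans (mul_le_mul_of_nonneg_left h2 K.2)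
  · filter_upwards [hne] with r hr
    rcases lt_or_gt_of_ne hr with h | h
    · rw [indicator_of_notMem (by simpa using h.le)]
      refine (hasDerivAt_const x (g r)).congr_of_eventuallyEq ?_
      filter_upwards [lt_mem_nhds h] with y hy
      rw [min_eq_right hy.le]
    · rw [indicator_of_mem (show r ∈ Ioi x from h)]
      refine hgx.congr_of_eventuallyEq ?_
      filter_upwards [gt_mem_nhds h] with y hy
      rw [min_eq_left hy.le]

/-- first-order condition for the multi-dark-pool allocation with exponential
utility: at an interior local minimum `ℓ̂` (with nonatomic values) of
`ℓ ↦ Σᵢ θⁱ Hᵢ(ℓⁱ)` on the affine set `{Σᵢ ℓⁱ = Σᵢ ℓ̂ⁱ}`, the quantities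
`θⁱ (q − ℓ̂ⁱ) exp(−ρα ℓ̂ⁱ(2q − ℓ̂ⁱ)) μᵢ((ℓ̂ⁱ, ∞))` are equal across pools. -/
theorem stmt16 (M : ℕ) (hM : 2 ≤ M) (q ρ α : ℝ) (hq : 0 < q) (hρ : 0 < ρ) (hα : 0 < α)
    (θ : Fin M → ℝ) (hθ : ∀ i, 0 < θ i)
    (μ : Fin M → Measure ℝ) [∀ i, IsFiniteMeasure (μ i)]
    (hsupp : ∀ i, μ i (Iio 0) = 0)
    (ℓ : Fin M → ℝ) (hℓ : ∀ i, 0 < ℓ i) (hatom : ∀ i, μ i {ℓ i} = 0)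
    (hmin : IsLocalMinOn
      (fun l : Fin M → ℝ =>
        ∑ i, θ i * ∫ r, Real.exp (-ρ * α * (min (l i) r * (2 * q - min (l i) r))) ∂(μ i))
      {l : Fin M → ℝ | ∑ i, l i = ∑ i, ℓ i} ℓ) :
    ∀ i j,
      θ i * (q - ℓ i) * Real.exp (-ρ * α * (ℓ i * (2 * q - ℓ i)))
          * (μ i (Ioi (ℓ i))).toReal
        = θ j * (q - ℓ j) * Real.exp (-ρ * α * (ℓ j * (2 * q - ℓ j)))
          * (μ j (Ioi (ℓ j))).toReal := by
  intro i j
  set g : ℝ → ℝ := fun x => Real.exp (-ρ * α * (x * (2 * q - x))) with hg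
  have hgC : ContDiff ℝ 1 g := by fun_prop
  have hgd : ∀ x, HasDerivAt g (-2 * ρ * α * ((q - x) * g x)) x := fun x => by
    have h := (((hasDerivAt_id x).mul ((hasDerivAt_id x).const_sub (2 * q))).const_mul
      (-ρ * α)).exp
    refine h.congr_deriv ?_
    simp only [hg, id, Pi.mul_apply]
    ring
  -- Shifting volume from pool `j` to pool `i` is a direction tangent to the constraint.
  set d : Fin M → ℝ := Pi.single i 1 - Pi.single j 1 with hd
  have hline : Filter.Tendsto (fun t : ℝ => fun k => ℓ k + t * d k) (nhds 0)
      (nhdsWithin ℓ {l : Fin M → ℝ | ∑ i, l i = ∑ i, ℓ i}) := by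
    refine tendsto_nhdsWithin_iff.2 ⟨?_, Filter.Eventually.of_forall fun t => ?_⟩
    · have hc : Continuous fun t : ℝ => fun k => ℓ k + t * d k := by fun_prop
      simpa using hc.tendsto 0
    · simp [Finset.sum_add_distrib, ← Finset.mul_sum, hd]
  have hloc : IsLocalMin
      (fun t : ℝ => ∑ k, θ k * ∫ r, g (min (ℓ k + t * d k) r) ∂(μ k)) 0 := by
    have h := hline.eventually hmin
    simpa [IsLocalMin, IsMinFilter, hg] using h
  have hder : HasDerivAt
      (fun t : ℝ => ∑ k, θ k * ∫ r, g (min (ℓ k + t * d k) r) ∂(μ k))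
      (∑ k, θ k * (-2 * ρ * α * ((q - ℓ k) * g (ℓ k)) * (μ k (Ioi (ℓ k))).toReal * d k)) 0 := by
    refine HasDerivAt.fun_sum fun k _ => HasDerivAt.const_mul _ ?_
    have h1 := hasDerivAt_integral_comp_min hgC (hgd (ℓ k)) (μ k) (hsupp k) (hℓ k) (hatom k)
    have h2 : HasDerivAt (fun t : ℝ => ℓ k + t * d k) (d k) 0 := by
      simpa using ((hasDerivAt_id (0 : ℝ)).mul_const (d k)).const_add (ℓ k)
    exact HasDerivAt.comp_of_eq (0 : ℝ) h1 h2 (by simp)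
  have h0 := hloc.hasDerivAt_eq_zero hder
  simp only [hd, Pi.sub_apply, mul_sub, Finset.sum_sub_distrib, Pi.single_apply, mul_ite, mul_one,
    mul_zero, Finset.sum_ite_eq', Finset.mem_univ, if_true] at h0
  have hne : -2 * ρ * α ≠ 0 := by simp [hρ.ne', hα.ne']
  refine mul_left_cancel₀ hne ?_
  simp only [hg] at h0
  linear_combination h0
end

section
/- Let q > 0, b ∈ ℝ, let h : ℝ → ℝ be nondecreasing on (−∞, b] and nonincreasing on [b, ∞), and let μ be a finite Borel measure on [0, ∞). Set ℓ* := min(q, max(q − b, 0)). Then for every ℓ ∈ [0, q]: ∫ h(q − min(ℓ, r)) dμ(r) ≤ ∫ h(q − min(ℓ*, r)) dμ(r). In fact the map ℓ ↦ ∫ h(q − min(ℓ, r)) dμ(r) is nondecreasing on [0, min(q, max(q − b, 0))] and nonincreasing on [min(q, max(q − b, 0)), q]. -/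
open Set MeasureTheory

/-!
Almost surely `r ≥ 0`, so the remaining inventory `q - min ℓ r` lies in `[0, q]`, where the
unimodal function `h` is bounded and measurable; hence every integrand is integrable and it
suffices to compare integrands pointwise. Below `ℓ*` the inventory stays in `[b, ∞)`, where a
larger `ℓ` lowers it and so raises `h`. Above `ℓ*`, the integrand changes with `ℓ` only if
`r > ℓ`, and then the inventory is already at or below `b`, so lowering it further lowers `h`.
The maximality of `ℓ*` follows from the two monotonicity statements.
-/

/-- A unimodal function is Borel measurable: on `(-∞, b]` it agrees with the monotone function
`x ↦ h (min x b)`, and on the complement with the antitone function `x ↦ h (max x b)`. -/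
lemma measurable_of_unimodal {b : ℝ} {h : ℝ → ℝ}
    (hmono : MonotoneOn h (Iic b)) (hanti : AntitoneOn h (Ici b)) : Measurable h := by
  have h1 : Monotone fun x => h (min x b) := fun x y hxy =>
    hmono (mem_Iic.2 (min_le_right _ _)) (mem_Iic.2 (min_le_right _ _)) (min_le_min_right b hxy)
  have h2 : Antitone fun x => h (max x b) := fun x y hxy =>
    hanti (mem_Ici.2 (le_max_right _ _)) (mem_Ici.2 (le_max_right _ _)) (max_le_max_right b hxy)
  classical
  have h3 : Measurable ((Iic b).piecewise (fun x => h (min x b)) fun x => h (max x b)) :=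
    Measurable.piecewise measurableSet_Iic h1.measurable h2.measurable
  convert h3 using 1
  ext x
  by_cases hx : x ≤ b
  · simp [Set.piecewise, hx]
  · simp [Set.piecewise, hx, max_eq_left (not_le.mp hx).le]

lemma integrable_of_unimodal {q b : ℝ} {h : ℝ → ℝ}
    (hmono : MonotoneOn h (Iic b)) (hanti : AntitoneOn h (Ici b))
    (μ : Measure ℝ) [IsFiniteMeasure μ] (hr : ∀ᵐ r ∂μ, 0 ≤ r) {ℓ : ℝ} (hℓ : ℓ ∈ Icc 0 q) :
    Integrable (fun r => h (q - min ℓ r)) μ := by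
  have hm : Measurable fun r => h (q - min ℓ r) :=
    (measurable_of_unimodal hmono hanti).comp (by fun_prop)
  refine Integrable.of_mem_Icc (min (h 0) (h q)) (h b) hm.aemeasurable ?_
  filter_upwards [hr] with r hr
  have h0 : 0 ≤ q - min ℓ r := by linarith [min_le_left ℓ r, hℓ.2]
  have h1 : q - min ℓ r ≤ q := by linarith [le_min hℓ.1 hr]
  rcases le_total (q - min ℓ r) b with hb | hb
  · exact ⟨(min_le_left _ _).trans (hmono (h0.trans hb) hb h0), hmono hb self_mem_Iic hb⟩
  · exact ⟨(min_le_right _ _).trans (hanti hb (hb.trans h1) h1), hanti self_mem_Ici hb hb⟩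

/-- for `q > 0`, `h` nondecreasing on `(−∞, b]` and nonincreasing on
`[b, ∞)`, and `μ` a finite Borel measure concentrated on `[0, ∞)`, the map
`ℓ ↦ ∫ h(q − min(ℓ, r)) dμ(r)` attains its maximum over `[0, q]` at
`ℓ* = min(q, max(q − b, 0))`, being nondecreasing on `[0, ℓ*]` and nonincreasing on
`[ℓ*, q]`. -/
theorem stmt17 (q b : ℝ) (hq : 0 < q) (h : ℝ → ℝ)
    (hmono : MonotoneOn h (Iic b)) (hanti : AntitoneOn h (Ici b))
    (μ : Measure ℝ) [IsFiniteMeasure μ] (hsupp : μ (Iio 0) = 0) :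
    (∀ ℓ ∈ Icc 0 q,
      (∫ r, h (q - min ℓ r) ∂μ)
        ≤ ∫ r, h (q - min (min q (max (q - b) 0)) r) ∂μ) ∧
    MonotoneOn (fun ℓ => ∫ r, h (q - min ℓ r) ∂μ)
      (Icc 0 (min q (max (q - b) 0))) ∧
    AntitoneOn (fun ℓ => ∫ r, h (q - min ℓ r) ∂μ)
      (Icc (min q (max (q - b) 0)) q) := by
  have hr : ∀ᵐ r ∂μ, 0 ≤ r := by
    rw [ae_iff]
    simp only [not_le]
    exact hsupp
  have hint : ∀ ℓ ∈ Icc 0 q, Integrable (fun r => h (q - min ℓ r)) μ :=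
    fun ℓ hℓ => integrable_of_unimodal hmono hanti μ hr hℓ
  have hs0 : 0 ≤ min q (max (q - b) 0) := le_min hq.le (le_max_right _ _)
  have hsq : min q (max (q - b) 0) ≤ q := min_le_left _ _
  have hup : MonotoneOn (fun ℓ => ∫ r, h (q - min ℓ r) ∂μ)
      (Icc 0 (min q (max (q - b) 0))) := by
    intro x hx y hy hxy
    refine integral_mono (hint x ⟨hx.1, hx.2.trans hsq⟩) (hint y ⟨hy.1, hy.2.trans hsq⟩) ?_
    intro r
    have hy' : y ≤ max (q - b) 0 := hy.2.trans (min_le_right _ _)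
    rcases le_total (q - b) 0 with hb | hb
    · -- Here `ℓ* = 0`, so the interval is a single point.
      rw [max_eq_right hb] at hy'
      have : x = y := le_antisymm hxy (hy'.trans hx.1)
      simp [this]
    · rw [max_eq_left hb] at hy'
      have h1 : min x r ≤ min y r := min_le_min_right r hxy
      have h2 : min y r ≤ y := min_le_left _ _
      apply hanti
      · simp only [mem_Ici]; linarith
      · simp only [mem_Ici]; linarith
      · linarith
  have hdown : AntitoneOn (fun ℓ => ∫ r, h (q - min ℓ r) ∂μ)
      (Icc (min q (max (q - b) 0)) q) := by
    intro x hx y hy hxy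
    refine integral_mono (hint y ⟨hs0.trans hy.1, hy.2⟩) (hint x ⟨hs0.trans hx.1, hx.2⟩) ?_
    intro r
    rcases min_le_iff.mp hx.1 with hqx | hbx
    · have : x = y := le_antisymm hxy (hy.2.trans hqx)
      simp [this]
    · have hbx' : q - b ≤ x := (le_max_left _ _).trans hbx
      rcases le_total r x with hrx | hxr
      · simp [min_eq_right hrx, min_eq_right (hrx.trans hxy)]
      · have h1 : x ≤ min y r := le_min hxy hxr
        simp only [min_eq_left hxr]
        apply hmono
        · simp only [mem_Iic]; linarith
        · simp only [mem_Iic]; linarith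
        · linarith
  refine ⟨fun ℓ hℓ => ?_, hup, hdown⟩
  rcases le_total ℓ (min q (max (q - b) 0)) with hl | hl
  · exact hup ⟨hℓ.1, hl⟩ ⟨hs0, le_rfl⟩ hl
  · exact hdown ⟨le_rfl, hsq⟩ ⟨hl, hℓ.2⟩ hl
end

section
/- Let T > 0, η > 0, α > 0, γ > 0, E₀ ∈ ℝ, and let g : [0, T] → ℝ be continuous. Then there exists exactly one quadruple (h₀, h₁, h₂, E) with h₀, h₁, h₂ : [0, T] → ℝ continuously differentiable and E : [0, T] → ℝ twice continuously differentiable such that, for all t ∈ [0, T]: (i) h₂'(t) + h₂(t)²/η = 0 with h₂(T) = −α; (ii) h₁'(t) + (1/η) h₁(t) h₂(t) + g(t) + γ μ(t) = 0 with h₁(T) = 0, where μ(t) := h₁(t)/(2η) + h₂(t)E(t)/η; (iii) 2η E'(t) = h₁(t) + 2 h₂(t) E(t) with E(0) = E₀; (iv) h₀'(t) + h₁(t)²/(4η) = 0 with h₀(T) = 0. -/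
/-!
The Riccati equation for `h₂` decouples: its solution is `-αη / (η + α (T - t))`, which is defined
on all of `[0, T]` because `α > 0`. Differentiating the equation for `E` and inserting the
equations for `h₁'` and `h₂'`, every term containing `h₂` cancels, and the mean trading rate
`m = E' = (h₁ + 2 h₂ E) / (2η)` solves the scalar linear equation `2η m' + γ m + g = 0`.

The remaining unknown is `m(0)`. The condition `h₁(T) = 0` reads `η m(T) + α E(T) = 0`, and since
`2η m + γ E + ∫ g` is conserved, it is an affine equation in `m(0)` whose slope
`η e + 2αη (1 - e) / γ`, with `e = exp (-γT / 2η) ∈ (0, 1)`, is strictly positive. This is why no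
smallness of `T` is needed, and it gives both existence and uniqueness; `h₁ = 2ηm - 2h₂E` and `h₀`
then follow by substitution and integration. For uniqueness of `h₂`, the difference of two
solutions of the Riccati equation solves a homogeneous linear equation (`eq_zero_of_linear`).
-/

open Set

/-- The coupled ODE system of the minor-player mean-field game: `h₀, h₁, h₂` are
continuously differentiable on `[0, T]`, `E` is twice continuously differentiable on
`[0, T]`, and for all `t ∈ [0, T]`:
(i) `h₂' + h₂²/η = 0`, `h₂(T) = −α`;
(ii) `h₁' + (1/η)h₁h₂ + g + γμ = 0`, `h₁(T) = 0`, where `μ = h₁/(2η) + h₂E/η`;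
(iii) `2ηE' = h₁ + 2h₂E`, `E(0) = E₀`;
(iv) `h₀' + h₁²/(4η) = 0`, `h₀(T) = 0`. -/
def SolvesMFGSystem (T η α γ E₀ : ℝ) (g : ℝ → ℝ) (h₀ h₁ h₂ E : ℝ → ℝ) : Prop :=
  ∃ h₀' h₁' h₂' E' E'' : ℝ → ℝ,
    ContinuousOn h₀' (Icc 0 T) ∧ ContinuousOn h₁' (Icc 0 T) ∧
    ContinuousOn h₂' (Icc 0 T) ∧ ContinuousOn E'' (Icc 0 T) ∧
    (∀ t ∈ Icc 0 T, HasDerivWithinAt h₀ (h₀' t) (Icc 0 T) t) ∧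
    (∀ t ∈ Icc 0 T, HasDerivWithinAt h₁ (h₁' t) (Icc 0 T) t) ∧
    (∀ t ∈ Icc 0 T, HasDerivWithinAt h₂ (h₂' t) (Icc 0 T) t) ∧
    (∀ t ∈ Icc 0 T, HasDerivWithinAt E (E' t) (Icc 0 T) t) ∧
    (∀ t ∈ Icc 0 T, HasDerivWithinAt E' (E'' t) (Icc 0 T) t) ∧
    (∀ t ∈ Icc 0 T, h₂' t + (h₂ t) ^ 2 / η = 0) ∧ h₂ T = -α ∧
    (∀ t ∈ Icc 0 T,
      h₁' t + (1 / η) * h₁ t * h₂ t + g t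
        + γ * (h₁ t / (2 * η) + h₂ t * E t / η) = 0) ∧ h₁ T = 0 ∧
    (∀ t ∈ Icc 0 T, 2 * η * E' t = h₁ t + 2 * h₂ t * E t) ∧ E 0 = E₀ ∧
    (∀ t ∈ Icc 0 T, h₀' t + (h₁ t) ^ 2 / (4 * η) = 0) ∧ h₀ T = 0

/-- A continuous function on `[0, T]` has a primitive there with prescribed value at a point. -/
lemma exists_primitive {T : ℝ} (hT : 0 < T) {f : ℝ → ℝ} (hf : ContinuousOn f (Icc 0 T))
    (a c : ℝ) :
    ∃ F : ℝ → ℝ, F a = c ∧ ∀ t ∈ Icc 0 T, HasDerivWithinAt F (f t) (Icc 0 T) t := by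
  have hc : Continuous (IccExtend hT.le ((Icc 0 T).domRestrict f)) :=
    (continuousOn_iff_continuous_domRestrict.1 hf).Icc_extend'
  refine ⟨fun t => c + ∫ s in a..t, IccExtend hT.le ((Icc 0 T).domRestrict f) s, by simp,
    fun t ht => ?_⟩
  have h := (hc.integral_hasStrictDerivAt a t).hasDerivAt.const_add c
  rw [IccExtend_of_mem _ _ ht] at h
  exact h.hasDerivWithinAt

lemma eq_of_deriv_zero {T : ℝ} {f : ℝ → ℝ}
    (hf : ∀ t ∈ Icc 0 T, HasDerivWithinAt f 0 (Icc 0 T) t) :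
    ∀ s ∈ Icc 0 T, ∀ t ∈ Icc 0 T, f s = f t := by
  intro s hs t ht
  have h := (convex_Icc (0 : ℝ) T).norm_image_sub_le_of_norm_hasDerivWithin_le
    (C := 0) hf (by simp) ht hs
  simp only [zero_mul, norm_le_zero_iff] at h
  linarith

/-- A homogeneous linear equation with a zero at one (possibly terminal) time has only the zero
solution. -/
lemma eq_zero_of_linear {T : ℝ} (hT : 0 < T) {a d : ℝ → ℝ} (ha : ContinuousOn a (Icc 0 T))
    (hd : ∀ t ∈ Icc 0 T, HasDerivWithinAt d (a t * d t) (Icc 0 T) t)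
    {t₀ : ℝ} (ht₀ : t₀ ∈ Icc 0 T) (h0 : d t₀ = 0) : ∀ t ∈ Icc 0 T, d t = 0 := by
  obtain ⟨A, -, hA⟩ := exists_primitive hT ha 0 0
  -- `exp (-A)` is an integrating factor
  have key : ∀ t ∈ Icc 0 T,
      HasDerivWithinAt (fun t => d t * Real.exp (-A t)) 0 (Icc 0 T) t := by
    intro t ht
    have h := (hd t ht).fun_mul (hA t ht).fun_neg.exp
    refine h.congr_deriv ?_
    ring
  intro t ht
  have h := eq_of_deriv_zero key t ht t₀ ht₀
  simp only [h0, zero_mul] at h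
  exact (mul_eq_zero.1 h).resolve_right (Real.exp_pos _).ne'

/-- In any solution the mean trading rate `(h₁ + 2 h₂ E) / (2η)` is the derivative of `E` and
solves a linear equation in which `h₂` no longer appears. -/
lemma rate_equation {T η α γ E₀ : ℝ} (hη : 0 < η) {g h₀ h₁ h₂ E : ℝ → ℝ}
    (h : SolvesMFGSystem T η α γ E₀ g h₀ h₁ h₂ E) :
    ∀ t ∈ Icc 0 T,
      HasDerivWithinAt E ((h₁ t + 2 * h₂ t * E t) / (2 * η)) (Icc 0 T) t ∧
      HasDerivWithinAt (fun t => (h₁ t + 2 * h₂ t * E t) / (2 * η))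
        (-(γ * ((h₁ t + 2 * h₂ t * E t) / (2 * η)) + g t) / (2 * η)) (Icc 0 T) t := by
  obtain ⟨h₀', h₁', h₂', E', E'', -, -, -, -, -, d1, d2, dE, -, e2, -, e1, -, eE, -, -, -⟩ := h
  intro t ht
  have hE' : E' t = (h₁ t + 2 * h₂ t * E t) / (2 * η) := by
    rw [← eE t ht]; field_simp
  refine ⟨hE' ▸ dE t ht, ?_⟩
  have hd := ((d1 t ht).fun_add (((d2 t ht).const_mul 2).fun_mul (dE t ht))).div_const (2 * η)
  refine hd.congr_deriv ?_
  have a1 : h₁' t = -((1 / η) * h₁ t * h₂ t + g t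
        + γ * (h₁ t / (2 * η) + h₂ t * E t / η)) := by linarith [e1 t ht]
  have a2 : h₂' t = -((h₂ t) ^ 2 / η) := by linarith [e2 t ht]
  rw [hE', a1, a2]
  field_simp
  ring

/-- The quantity is `γ` times the slope of the terminal condition as an affine function of the
initial trading rate `m(0)`. -/
lemma slope_pos {T η α γ : ℝ} (hT : 0 < T) (hη : 0 < η) (hα : 0 < α) (hγ : 0 < γ) :
    0 < γ * η * Real.exp (-(γ / (2 * η)) * T)
      + 2 * α * η * (1 - Real.exp (-(γ / (2 * η)) * T)) := by
  have h1 : Real.exp (-(γ / (2 * η)) * T) < 1 := by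
    rw [Real.exp_lt_one_iff]
    have : 0 < γ / (2 * η) * T := by positivity
    linarith
  have h2 := Real.exp_pos (-(γ / (2 * η)) * T)
  have h3 : 0 < 1 - Real.exp (-(γ / (2 * η)) * T) := by linarith
  positivity

lemma mfg_unique {T η α γ E₀ : ℝ} (hT : 0 < T) (hη : 0 < η) (hα : 0 < α) (hγ : 0 < γ)
    {g h₀ h₁ h₂ E k₀ k₁ k₂ F : ℝ → ℝ}
    (hh : SolvesMFGSystem T η α γ E₀ g h₀ h₁ h₂ E)
    (hk : SolvesMFGSystem T η α γ E₀ g k₀ k₁ k₂ F) :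
    ∀ t ∈ Icc 0 T, k₀ t = h₀ t ∧ k₁ t = h₁ t ∧ k₂ t = h₂ t ∧ F t = E t := by
  have rh := rate_equation hη hh
  have rk := rate_equation hη hk
  obtain ⟨h₀', h₁', h₂', E', E'', -, -, -, -, d0, d1, d2, -, -, e2, c2, -, c1, -, cE, e0, c0⟩ := hh
  obtain ⟨k₀', k₁', k₂', F', F'', -, -, -, -, D0, D1, D2, -, -, E2, C2, -, C1, -, CF, E0, C0⟩ := hk
  have m0 : (0 : ℝ) ∈ Icc 0 T := left_mem_Icc.2 hT.le
  have mT : T ∈ Icc 0 T := right_mem_Icc.2 hT.le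
  have u2 : ∀ t ∈ Icc 0 T, k₂ t - h₂ t = 0 := by
    refine eq_zero_of_linear hT (a := fun t => -(k₂ t + h₂ t) / η) ?_ ?_ mT (by rw [c2, C2]; ring)
    · exact (ContinuousOn.add (fun t ht => (D2 t ht).continuousWithinAt)
        (fun t ht => (d2 t ht).continuousWithinAt)).neg.div_const η
    · intro t ht
      refine ((D2 t ht).fun_sub (d2 t ht)).congr_deriv ?_
      have a1 : k₂' t = -((k₂ t) ^ 2 / η) := by linarith [E2 t ht]
      have a2 : h₂' t = -((h₂ t) ^ 2 / η) := by linarith [e2 t ht]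
      rw [a1, a2]
      ring
  set m : ℝ → ℝ := fun t => (h₁ t + 2 * h₂ t * E t) / (2 * η) with hm
  set n : ℝ → ℝ := fun t => (k₁ t + 2 * k₂ t * F t) / (2 * η) with hn
  have dm : ∀ t ∈ Icc 0 T, HasDerivWithinAt m (-(γ * m t + g t) / (2 * η)) (Icc 0 T) t :=
    fun t ht => (rh t ht).2
  have dn : ∀ t ∈ Icc 0 T, HasDerivWithinAt n (-(γ * n t + g t) / (2 * η)) (Icc 0 T) t :=
    fun t ht => (rk t ht).2
  have dE : ∀ t ∈ Icc 0 T, HasDerivWithinAt E (m t) (Icc 0 T) t := fun t ht => (rh t ht).1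
  have dF : ∀ t ∈ Icc 0 T, HasDerivWithinAt F (n t) (Icc 0 T) t := fun t ht => (rk t ht).1
  have decay : ∀ t ∈ Icc 0 T, HasDerivWithinAt
      (fun t => (n t - m t) * Real.exp (γ / (2 * η) * t)) 0 (Icc 0 T) t := by
    intro t ht
    have h := ((dn t ht).fun_sub (dm t ht)).fun_mul
      (((hasDerivWithinAt_id t (Icc 0 T)).const_mul (γ / (2 * η))).exp)
    refine h.congr_deriv ?_
    simp only [id]
    ring
  have conserved : ∀ t ∈ Icc 0 T, HasDerivWithinAt
      (fun t => 2 * η * (n t - m t) + γ * (F t - E t)) 0 (Icc 0 T) t := by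
    intro t ht
    have h := (((dn t ht).fun_sub (dm t ht)).const_mul (2 * η)).fun_add
      (((dF t ht).fun_sub (dE t ht)).const_mul γ)
    refine h.congr_deriv ?_
    field_simp
    ring
  have x1 := eq_of_deriv_zero decay T mT 0 m0
  have x2 := eq_of_deriv_zero conserved T mT 0 m0
  simp only [mul_zero, Real.exp_zero, mul_one, CF, cE, sub_self, add_zero] at x1 x2
  have tm : η * m T = -α * E T := by
    simp only [hm, c1, c2]; field_simp; ring
  have tn : η * n T = -α * F T := by
    simp only [hn, C1, C2]; field_simp; ring
  have x3 : n T - m T = (n 0 - m 0) * Real.exp (-(γ / (2 * η)) * T) := by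
    rw [← x1, mul_assoc, ← Real.exp_add]
    simp
  have x4 : n 0 - m 0 = 0 := by
    refine (mul_eq_zero.1 (?_ : (n 0 - m 0) * _ = 0)).resolve_right
      (slope_pos hT hη hα hγ).ne'
    linear_combination (γ * η - 2 * α * η) * (-x3) + γ * (tn - tm) - α * x2
  have nm : ∀ t ∈ Icc 0 T, n t = m t := by
    intro t ht
    have h := eq_of_deriv_zero decay t ht 0 m0
    simp only [x4, zero_mul] at h
    linarith [(mul_eq_zero.1 h).resolve_right (Real.exp_pos _).ne']
  have FE : ∀ t ∈ Icc 0 T, F t = E t := by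
    intro t ht
    have h := eq_of_deriv_zero conserved t ht 0 m0
    simp only [x4, nm t ht, CF, cE, sub_self, mul_zero, add_zero, zero_add] at h
    linarith [(mul_eq_zero.1 h).resolve_left hγ.ne']
  have u1 : ∀ t ∈ Icc 0 T, k₁ t = h₁ t := by
    intro t ht
    have h := nm t ht
    simp only [hm, hn, FE t ht, sub_eq_zero.1 (u2 t ht)] at h
    field_simp at h
    linarith
  have u0 : ∀ t ∈ Icc 0 T, k₀ t = h₀ t := by
    intro t ht
    have h := eq_of_deriv_zero (f := fun t => k₀ t - h₀ t) (T := T) (fun t ht => by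
      refine ((D0 t ht).fun_sub (d0 t ht)).congr_deriv ?_
      have a1 := E0 t ht
      have a2 := e0 t ht
      rw [u1 t ht] at a1
      linarith) t ht T mT
    simp only [c0, C0] at h
    linarith
  exact fun t ht => ⟨u0 t ht, u1 t ht, sub_eq_zero.1 (u2 t ht), FE t ht⟩

lemma mfg_exists {T η α γ E₀ : ℝ} (hT : 0 < T) (hη : 0 < η) (hα : 0 < α) (hγ : 0 < γ)
    {g : ℝ → ℝ} (hg : ContinuousOn g (Icc 0 T)) :
    ∃ h₀ h₁ h₂ E : ℝ → ℝ, SolvesMFGSystem T η α γ E₀ g h₀ h₁ h₂ E := by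
  obtain ⟨Γ, Γ0, dΓ⟩ := exists_primitive hT hg 0 0
  have hc : ContinuousOn (fun t => Real.exp (γ / (2 * η) * t) * g t / (2 * η)) (Icc 0 T) :=
    ((by fun_prop : Continuous fun t => Real.exp (γ / (2 * η) * t)).continuousOn.mul hg).div_const _
  obtain ⟨G, G0, dG⟩ := exists_primitive hT hc 0 0
  obtain ⟨e, he⟩ : ∃ e, e = Real.exp (-(γ / (2 * η)) * T) := ⟨_, rfl⟩
  have hs := slope_pos hT hη hα hγ
  rw [← he] at hs
  -- the initial trading rate for which `η m(T) + α E(T) = 0`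
  obtain ⟨m₀, hm₀⟩ : ∃ m₀ : ℝ, (γ * η * e + 2 * α * η * (1 - e)) * m₀
      = γ * η * e * G T - α * γ * E₀ - 2 * α * η * e * G T + α * Γ T :=
    ⟨_ / (γ * η * e + 2 * α * η * (1 - e)), mul_div_cancel₀ _ hs.ne'⟩
  set m : ℝ → ℝ := fun t => Real.exp (-(γ / (2 * η)) * t) * (m₀ - G t) with hm
  set E : ℝ → ℝ := fun t => E₀ + (2 * η * m₀ - 2 * η * m t - Γ t) / γ with hE
  set h₂ : ℝ → ℝ := fun t => -(α * η) / (η + α * (T - t)) with hh₂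
  have dm : ∀ t ∈ Icc 0 T, HasDerivWithinAt m (-(γ * m t + g t) / (2 * η)) (Icc 0 T) t := by
    intro t ht
    have h := (((hasDerivWithinAt_id t (Icc 0 T)).const_mul (-(γ / (2 * η)))).exp).fun_mul
      ((dG t ht).const_sub m₀)
    refine h.congr_deriv ?_
    simp only [hm, id]
    have hx : Real.exp (-(γ / (2 * η)) * t) * Real.exp (γ / (2 * η) * t) = 1 := by
      rw [← Real.exp_add]; simp
    linear_combination (-(g t / (2 * η))) * hx
  have dE : ∀ t ∈ Icc 0 T, HasDerivWithinAt E (m t) (Icc 0 T) t := by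
    intro t ht
    have h := (((((dm t ht).const_mul (2 * η)).const_sub (2 * η * m₀)).fun_sub
      (dΓ t ht)).div_const γ).const_add E₀
    refine h.congr_deriv ?_
    field_simp
    ring
  have d2 : ∀ t ∈ Icc 0 T, HasDerivWithinAt h₂ (-((h₂ t) ^ 2 / η)) (Icc 0 T) t := by
    intro t ht
    have hp : η + α * (T - t) ≠ 0 := by
      have : 0 ≤ α * (T - t) := mul_nonneg hα.le (by linarith [ht.2])
      linarith
    have h := (hasDerivWithinAt_const t (Icc 0 T) (-(α * η))).fun_div
      ((((hasDerivWithinAt_id t (Icc 0 T)).const_sub T).const_mul α).const_add η) hp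
    refine h.congr_deriv ?_
    simp only [hh₂, id]
    field_simp
    ring
  have c2 : h₂ T = -α := by
    simp only [hh₂, sub_self, mul_zero, add_zero]; field_simp
  set h₁ : ℝ → ℝ := fun t => 2 * η * m t - 2 * h₂ t * E t with hh₁
  have d1 : ∀ t ∈ Icc 0 T, HasDerivWithinAt h₁ (-((1 / η) * h₁ t * h₂ t + g t
        + γ * (h₁ t / (2 * η) + h₂ t * E t / η))) (Icc 0 T) t := by
    intro t ht
    have h := ((dm t ht).const_mul (2 * η)).fun_sub
      (((d2 t ht).const_mul 2).fun_mul (dE t ht))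
    refine h.congr_deriv ?_
    simp only [hh₁]
    field_simp
    ring
  have c1 : h₁ T = 0 := by
    have hmT : m T = e * (m₀ - G T) := by rw [hm, he]
    simp only [hh₁, c2, hE, hmT]
    field_simp
    linear_combination 2 * hm₀
  have k1 : ContinuousOn h₁ (Icc 0 T) := fun t ht => (d1 t ht).continuousWithinAt
  have k2 : ContinuousOn h₂ (Icc 0 T) := fun t ht => (d2 t ht).continuousWithinAt
  have kE : ContinuousOn E (Icc 0 T) := fun t ht => (dE t ht).continuousWithinAt
  have km : ContinuousOn m (Icc 0 T) := fun t ht => (dm t ht).continuousWithinAt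
  have k0 : ContinuousOn (fun t => -((h₁ t) ^ 2 / (4 * η))) (Icc 0 T) :=
    ((k1.pow 2).div_const _).neg
  obtain ⟨h₀, c0, d0⟩ := exists_primitive hT k0 T 0
  refine ⟨h₀, h₁, h₂, E, _, _, _, m, _, k0, ?_, ?_, ?_, d0, d1, d2, dE, dm,
    fun t _ => by ring, c2, fun t _ => by ring, c1, fun t _ => by simp only [hh₁]; ring,
    ?_, fun t _ => by ring, c0⟩
  · exact (((k1.const_mul _).mul k2).add hg |>.add
      (((k1.div_const _).add ((k2.mul kE).div_const _)).const_mul γ)).neg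
  · exact ((k2.pow 2).div_const _).neg
  · exact ((km.const_mul γ).add hg).neg.div_const _
  · simp [hE, hm, G0, Γ0]

/-- for continuous `g` the coupled MFG ODE system admits exactly one solution
quadruple `(h₀, h₁, h₂, E)` on `[0, T]`. -/
theorem stmt19 (T η α γ E₀ : ℝ) (hT : 0 < T) (hη : 0 < η) (hα : 0 < α) (hγ : 0 < γ)
    (g : ℝ → ℝ) (hg : ContinuousOn g (Icc 0 T)) :
    ∃ h₀ h₁ h₂ E : ℝ → ℝ,
      SolvesMFGSystem T η α γ E₀ g h₀ h₁ h₂ E ∧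
      ∀ k₀ k₁ k₂ F : ℝ → ℝ, SolvesMFGSystem T η α γ E₀ g k₀ k₁ k₂ F →
        ∀ t ∈ Icc 0 T, k₀ t = h₀ t ∧ k₁ t = h₁ t ∧ k₂ t = h₂ t ∧ F t = E t := by
  obtain ⟨h₀, h₁, h₂, E, h⟩ := mfg_exists (E₀ := E₀) hT hη hα hγ hg
  exact ⟨h₀, h₁, h₂, E, h, fun _ _ _ _ hk => mfg_unique hT hη hα hγ h hk⟩
end
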